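/- Unconditional energy dissipation of the second-order (BDF2) structure-preserving IVS scheme (Theorem 3.3, second part): let τ, M, λ, ν, ε, δ₀ > 0, β ≥ 0, and γ*, R^{n−1}, Rⁿ, R^{n+1} ∈ ℝ. Let φ^{n−1}, φⁿ, φ^{n+1}, μ^{n−1}, μⁿ, μ^{n+1}, p^{n−1}, pⁿ : ℝ^d → ℝ and u^{n−1}, uⁿ, u^{n+1}, û^{n+1} : ℝ^d → ℝ^d all be C², and let p^{n+1} : ℝ^d → ℝ be C¹. Write w* := 2wⁿ − w^{n−1} for w ∈ {φ, μ, u, p, R}. Assume E₁(φ*) + δ₀ > 0 and ξ^{n+1} = R^{n+1}/√(E₁(φ*) + δ₀). Assume, pointwise on Ω: (i) (3φ^{n+1} − 4φⁿ + φ^{n−1})/(2τ) + ξ^{n+1}∇·(u*φ*) = MΔμ^{n+1}; (ii) μ^{n+1} = −λΔφ^{n+1} + λβφ^{n+1} + λξ^{n+1}F′(φ*); (iii) (3û^{n+1} − 4uⁿ + u^{n−1})/(2τ) + ξ^{n+1}u*·∇u* − νΔû^{n+1} = −ξ^{n+1}(φ*∇μ* + γ*∇p*); (iv) (3/(2τ))(u^{n+1}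 − û^{n+1}) − νΔ(u^{n+1} − û^{n+1}) + ∇p^{n+1} = γ*∇p*; (v) ∇·u^{n+1} = ∇·uⁿ = ∇·u^{n−1} = 0; together with the boundary conditions ∂ₙφ^{n+1} = ∂ₙμ^{n+1} = 0 on ∂Ω and û^{n+1} = u^{n+1} = uⁿ = u^{n−1} = 0 on ∂Ω, and the scalar relation (3R^{n+1} − 4Rⁿ + R^{n−1})/(2τ) = [λ(F′(φ*), (3φ^{n+1} − 4φⁿ + φ^{n−1})/(2τ)) + (μ^{n+1}, ∇·(u*φ*)) + (û^{n+1}, φ*∇μ*) + b(u*, u*, û^{n+1}) + γ*(∇p*, û^{n+1})]/(2λ√(E₁(φ*) + δ₀)). Define Ẽ^{n+1} = ¼(‖u^{n+1}‖² + ‖2u^{n+1} − uⁿ‖²) + (λ/4)(‖∇φ^{n+1}‖² + ‖∇(2φ^{n+1} − φⁿ)‖²) + (λβ/4)(‖φ^{n+1}‖² + ‖2φ^{n+1} − φⁿ‖²) + (λ/2)((R^{n+1})² + (2R^{n+1} − Rⁿ)²) + (ντ/6)‖∇u^{n+1}‖², and Ẽⁿ by the same formula with the index pair (n+1, n) replaced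 by (n, n−1). Then Ẽ^{n+1} − Ẽⁿ ≤ −Mτ‖∇μ^{n+1}‖² − (ντ/6)(‖∇(u^{n+1} − û^{n+1})‖² + ‖∇û^{n+1}‖²). -/

import Mathlib

open MeasureTheory Finset

noncomputable section

/-- Partial derivative of `f` in coordinate direction `i`. -/
def pd {d : ℕ} (i : Fin d) (f : (Fin d → ℝ) → ℝ) (x : Fin d → ℝ) : ℝ :=
  fderiv ℝ f x (Pi.single i 1)

/-- Divergence of a vector field. -/
def vdiv {d : ℕ} (u : (Fin d → ℝ) → Fin d → ℝ) (x : Fin d → ℝ) : ℝ :=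
  ∑ i, pd i (fun y => u y i) x

/-- Laplacian. -/
def lap {d : ℕ} (f : (Fin d → ℝ) → ℝ) (x : Fin d → ℝ) : ℝ :=
  ∑ i, pd i (pd i f) x

/-- Convection term `(u·∇)v`, component `i`. -/
def convect {d : ℕ} (u v : (Fin d → ℝ) → Fin d → ℝ) (x : Fin d → ℝ) (i : Fin d) : ℝ :=
  ∑ j, u x j * pd j (fun y => v y i) x

/-- Trilinear form `b(u,v,w) = ∫_Ω (u·∇v)·w dx`. -/
def trib {d : ℕ} (Ω : Set (Fin d → ℝ)) (u v w : (Fin d → ℝ) → Fin d → ℝ) : ℝ :=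
  ∫ x in Ω, ∑ i, convect u v x i * w x i

/-- Homogeneous Neumann boundary condition on the box `[a,b]`. -/
def neumannBC {d : ℕ} (a b : Fin d → ℝ) (f : (Fin d → ℝ) → ℝ) : Prop :=
  ∀ i : Fin d, ∀ x ∈ Set.Icc a b, (x i = a i ∨ x i = b i) → pd i f x = 0

/-- `F(s) = G(s) - (β/2)s²` with `G(s) = (1-s²)²/(4ε²)`. -/
def Ffun (ε β s : ℝ) : ℝ := (1 - s^2)^2 / (4 * ε^2) - (β / 2) * s^2

/-- `F′(s) = (s³ - s)/ε² - βs`. -/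
def Fprime (ε β s : ℝ) : ℝ := (s^3 - s) / ε^2 - β * s

/-- `E₁(φ) = ∫_Ω F(φ) dx`. -/
def E1 {d : ℕ} (Ω : Set (Fin d → ℝ)) (ε β : ℝ) (φ : (Fin d → ℝ) → ℝ) : ℝ :=
  ∫ x in Ω, Ffun ε β (φ x)

/-- Second-order extrapolation `w* = 2wⁿ - w^{n-1}` for scalar functions. -/
def sstar {d : ℕ} (f g : (Fin d → ℝ) → ℝ) : (Fin d → ℝ) → ℝ :=
  fun x => 2 * f x - g x

/-- Second-order extrapolation `w* = 2wⁿ - w^{n-1}` for vector fields. -/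
def vstar {d : ℕ} (u v : (Fin d → ℝ) → Fin d → ℝ) : (Fin d → ℝ) → Fin d → ℝ :=
  fun x i => 2 * u x i - v x i


lemma cont_pd {d : ℕ} {f : (Fin d → ℝ) → ℝ} (hf : ContDiff ℝ 1 f) (i : Fin d) :
    Continuous (pd i f) :=
  (hf.continuous_fderiv (by norm_num)).clm_apply continuous_const

lemma contDiff_pd {d : ℕ} {f : (Fin d → ℝ) → ℝ} (hf : ContDiff ℝ 2 f) (i : Fin d) :
    ContDiff ℝ 1 (pd i f) :=
  (hf.fderiv_right (m := 1) (by norm_num)).clm_apply contDiff_const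

lemma cont_lap {d : ℕ} {f : (Fin d → ℝ) → ℝ} (hf : ContDiff ℝ 2 f) : Continuous (lap f) :=
  continuous_finsetSum _ fun i _ => cont_pd (contDiff_pd hf i) i

lemma pd_mul {d : ℕ} {f g : (Fin d → ℝ) → ℝ} (hf : ContDiff ℝ 1 f) (hg : ContDiff ℝ 1 g)
    (i : Fin d) (x : Fin d → ℝ) :
    pd i (fun y => f y * g y) x = pd i f x * g x + f x * pd i g x := by
  unfold pd
  rw [fderiv_fun_mul (hf.differentiable (by norm_num) x) (hg.differentiable (by norm_num) x)]
  simp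
  ring

lemma pd_sub {d : ℕ} {f g : (Fin d → ℝ) → ℝ} (hf : ContDiff ℝ 1 f) (hg : ContDiff ℝ 1 g)
    (i : Fin d) (x : Fin d → ℝ) :
    pd i (fun y => f y - g y) x = pd i f x - pd i g x := by
  unfold pd
  rw [fderiv_fun_sub (hf.differentiable (by norm_num) x) (hg.differentiable (by norm_num) x)]
  simp

lemma pd_cmul {d : ℕ} {f : (Fin d → ℝ) → ℝ} (hf : ContDiff ℝ 1 f) (c : ℝ)
    (i : Fin d) (x : Fin d → ℝ) :
    pd i (fun y => c * f y) x = c * pd i f x := by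
  unfold pd
  rw [fderiv_const_mul (hf.differentiable (by norm_num) x)]
  simp

lemma pd_sstar {d : ℕ} {f g : (Fin d → ℝ) → ℝ} (hf : ContDiff ℝ 1 f) (hg : ContDiff ℝ 1 g)
    (i : Fin d) (x : Fin d → ℝ) :
    pd i (sstar f g) x = 2 * pd i f x - pd i g x := by
  unfold sstar
  rw [pd_sub (contDiff_const.mul hf) hg, pd_cmul hf]

lemma int_box {d : ℕ} (a b : Fin d → ℝ) {f : (Fin d → ℝ) → ℝ} (hf : Continuous f) :
    IntegrableOn f (Set.Icc a b) :=
  hf.continuousOn.integrableOn_compact isCompact_Icc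

/-- Divergence theorem with vanishing normal component. -/
lemma int_div_zero {d : ℕ} {a b : Fin d → ℝ} (hab : ∀ i, a i < b i)
    (h : Fin d → (Fin d → ℝ) → ℝ) (hC : ∀ i, ContDiff ℝ 1 (h i))
    (hbc : ∀ i, ∀ x ∈ Set.Icc a b, (x i = a i ∨ x i = b i) → h i x = 0) :
    ∫ x in Set.Icc a b, ∑ i, pd i (h i) x = 0 := by
  cases d with
  | zero => simp
  | succ n =>
    have hle : a ≤ b := fun i => (hab i).le
    have key := integral_divergence_of_hasFDerivAt_off_countable' a b hle h
      (fun i x => fderiv ℝ (h i) x) ∅ Set.countable_empty (fun i => (hC i).continuous.continuousOn)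
      (fun x _ i => ((hC i).differentiable (by norm_num) x).hasFDerivAt)
      (int_box a b (continuous_finsetSum _ fun i _ => cont_pd (hC i) i))
    refine key.trans ?_
    refine Finset.sum_eq_zero fun i _ => ?_
    have hmem : ∀ (c : ℝ), c ∈ Set.Icc (a i) (b i) →
        ∀ x ∈ Set.Icc (a ∘ i.succAbove) (b ∘ i.succAbove),
        (Fin.insertNth i c x : Fin (n+1) → ℝ) ∈ Set.Icc a b := by
      intro c hc x hx
      exact Fin.insertNth_mem_Icc.2 ⟨hc, hx⟩
    have h1 : (∫ x in Set.Icc (a ∘ i.succAbove) (b ∘ i.succAbove),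
        h i (Fin.insertNth i (b i) x)) = 0 := by
      refine setIntegral_eq_zero_of_forall_eq_zero fun x hx => ?_
      exact hbc i _ (hmem _ ⟨(hab i).le, le_rfl⟩ x hx) (Or.inr (by simp))
    have h2 : (∫ x in Set.Icc (a ∘ i.succAbove) (b ∘ i.succAbove),
        h i (Fin.insertNth i (a i) x)) = 0 := by
      refine setIntegral_eq_zero_of_forall_eq_zero fun x hx => ?_
      exact hbc i _ (hmem _ ⟨le_rfl, (hab i).le⟩ x hx) (Or.inl (by simp))
    rw [h1, h2, sub_zero]

lemma green {d : ℕ} {a b : Fin d → ℝ} (hab : ∀ i, a i < b i)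
    {f g : (Fin d → ℝ) → ℝ} (hf : ContDiff ℝ 2 f) (hg : ContDiff ℝ 1 g)
    (hbc : ∀ i, ∀ x ∈ Set.Icc a b, (x i = a i ∨ x i = b i) → pd i f x * g x = 0) :
    (∫ x in Set.Icc a b, lap f x * g x) + (∫ x in Set.Icc a b, ∑ i, pd i f x * pd i g x) = 0 := by
  have hg0 := hg.continuous
  have hl := cont_lap hf
  have h1 := fun i => cont_pd (hf.of_le (by norm_num : (1 : WithTop ℕ∞) ≤ 2)) i
  have h2 := fun i => cont_pd hg i
  rw [← integral_add (int_box a b (by fun_prop)) (int_box a b (by fun_prop)),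
    ← int_div_zero hab (fun i y => pd i f y * g y) (fun i => (contDiff_pd hf i).mul hg) hbc]
  congr 1
  ext x
  simp only [pd_mul (contDiff_pd hf _) hg, lap, Finset.sum_add_distrib, Finset.sum_mul]

lemma divfree_orth {d : ℕ} {a b : Fin d → ℝ} (hab : ∀ i, a i < b i)
    {p : (Fin d → ℝ) → ℝ} {w : (Fin d → ℝ) → Fin d → ℝ} (hp : ContDiff ℝ 1 p)
    (hw : ∀ i, ContDiff ℝ 1 (fun y => w y i)) (hdiv : ∀ x ∈ Set.Icc a b, vdiv w x = 0)
    (hbc : ∀ i, ∀ x ∈ Set.Icc a b, (x i = a i ∨ x i = b i) → w x i = 0) :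
    ∫ x in Set.Icc a b, ∑ i, w x i * pd i p x = 0 := by
  rw [← int_div_zero hab (fun i y => w y i * p y) (fun i => (hw i).mul hp)
    (fun i x hx h => by simp [hbc i x hx h])]
  refine setIntegral_congr_fun measurableSet_Icc fun x hx => ?_
  have := hdiv x hx
  unfold vdiv at this
  simp only [pd_mul (hw _) hp, Finset.sum_add_distrib, ← Finset.sum_mul, this]
  ring

lemma face_frontier {d : ℕ} {a b : Fin d → ℝ} {x : Fin d → ℝ}
    (hx : x ∈ Set.Icc a b) (i : Fin d) (h : x i = a i ∨ x i = b i) :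
    x ∈ frontier (Set.Icc a b) := by
  rw [frontier, isClosed_Icc.closure_eq]
  refine ⟨hx, fun hi => ?_⟩
  rw [← Set.pi_univ_Icc, interior_pi_set Set.finite_univ] at hi
  have : x i ∈ interior (Set.Icc (a i) (b i)) := hi i (Set.mem_univ i)
  rw [interior_Icc] at this
  rcases h with h | h
  · exact absurd this.1 (by rw [h]; exact lt_irrefl _)
  · exact absurd this.2 (by rw [h]; exact lt_irrefl _)

lemma comb_nonneg {d n : ℕ} (a b : Fin d → ℝ) (c : Fin n → ℝ) (f : Fin n → (Fin d → ℝ) → ℝ)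
    (hf : ∀ k, Continuous (f k)) (h : ∀ x ∈ Set.Icc a b, 0 ≤ ∑ k, c k * f k x) :
    0 ≤ ∑ k, c k * ∫ x in Set.Icc a b, f k x := by
  have : ∑ k, c k * ∫ x in Set.Icc a b, f k x = ∫ x in Set.Icc a b, ∑ k, c k * f k x := by
    rw [integral_finsetSum _ fun k _ => (int_box a b (hf k)).const_mul (c k)]
    simp only [integral_const_mul]
  rw [this]
  exact setIntegral_nonneg measurableSet_Icc h

lemma comb_zero {d n : ℕ} (a b : Fin d → ℝ) (c : Fin n → ℝ) (f : Fin n → (Fin d → ℝ) → ℝ)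
    (hf : ∀ k, Continuous (f k)) (h : ∀ x ∈ Set.Icc a b, ∑ k, c k * f k x = 0) :
    ∑ k, c k * ∫ x in Set.Icc a b, f k x = 0 := by
  have : ∑ k, c k * ∫ x in Set.Icc a b, f k x = ∫ x in Set.Icc a b, ∑ k, c k * f k x := by
    rw [integral_finsetSum _ fun k _ => (int_box a b (hf k)).const_mul (c k)]
    simp only [integral_const_mul]
  rw [this]
  exact setIntegral_eq_zero_of_forall_eq_zero h


lemma vgreen {d : ℕ} {a b : Fin d → ℝ} (hab : ∀ i, a i < b i)
    {f g : (Fin d → ℝ) → Fin d → ℝ} (hf : ∀ i, ContDiff ℝ 2 (fun y => f y i))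
    (hg : ∀ i, ContDiff ℝ 1 (fun y => g y i))
    (hbc : ∀ i, ∀ x ∈ Set.Icc a b, (x i = a i ∨ x i = b i) → g x = 0) :
    (∫ x in Set.Icc a b, ∑ i, lap (fun y => f y i) x * g x i)
      + (∫ x in Set.Icc a b, ∑ i, ∑ j, pd j (fun y => f y i) x * pd j (fun y => g y i) x) = 0 := by
  have hg0 := fun i => (hg i).continuous
  have hl := fun i => cont_lap (hf i)
  have h1 := fun i j => cont_pd ((hf i).of_le (by norm_num : (1 : WithTop ℕ∞) ≤ 2)) j
  have h2 := fun i j => cont_pd (hg i) j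
  rw [integral_finsetSum _ fun i _ => int_box a b (by fun_prop),
    integral_finsetSum _ fun i _ => int_box a b (by fun_prop), ← Finset.sum_add_distrib]
  refine Finset.sum_eq_zero fun i _ => ?_
  refine green hab (hf i) (hg i) fun j x hx h => ?_
  simp [hbc j x hx h]

/-- Testing the correction step against a divergence-free field with zero trace. -/
lemma corr_orth {d : ℕ} {a b : Fin d → ℝ} (hab : ∀ i, a i < b i) (τ ν γs : ℝ)
    {p q : (Fin d → ℝ) → ℝ} {e w : (Fin d → ℝ) → Fin d → ℝ}
    (hp : ContDiff ℝ 1 p) (hq : ContDiff ℝ 1 q)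
    (he : ∀ i, ContDiff ℝ 2 (fun y => e y i))
    (hw : ∀ i, ContDiff ℝ 1 (fun y => w y i))
    (heq : ∀ x ∈ Set.Icc a b, ∀ i, (3 / (2 * τ)) * e x i - ν * lap (fun y => e y i) x + pd i p x
      = γs * pd i q x)
    (hdiv : ∀ x ∈ Set.Icc a b, vdiv w x = 0)
    (hbc : ∀ i, ∀ x ∈ Set.Icc a b, (x i = a i ∨ x i = b i) → w x = 0) :
    (3 / (2 * τ)) * (∫ x in Set.Icc a b, ∑ i, e x i * w x i)
      + ν * (∫ x in Set.Icc a b, ∑ i, ∑ j, pd j (fun y => e y i) x * pd j (fun y => w y i) x)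
      = 0 := by
  have hw0 := fun i => (hw i).continuous
  have he0 := fun i => (he i).continuous
  have hl := fun i => cont_lap (he i)
  have hp1 := fun i => cont_pd hp i
  have hq1 := fun i => cont_pd hq i
  have g := vgreen hab he hw hbc
  have o1 := divfree_orth hab hp hw hdiv (fun i x hx h => by simp [hbc i x hx h])
  have o2 := divfree_orth hab hq hw hdiv (fun i x hx h => by simp [hbc i x hx h])
  have c := comb_zero a b ![3 / (2 * τ), -ν, 1, -γs]
    ![fun x => ∑ i, e x i * w x i, fun x => ∑ i, lap (fun y => e y i) x * w x i,
      fun x => ∑ i, w x i * pd i p x, fun x => ∑ i, w x i * pd i q x]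
    (by
      simp only [Fin.forall_fin_succ, IsEmpty.forall_iff, and_true]
      refine ⟨?_, ?_, ?_, ?_⟩ <;> simp <;> fun_prop)
    (by
      intro x hx
      simp only [Fin.sum_univ_succ, Matrix.cons_val_zero, Matrix.cons_val_succ,
        Finset.univ_eq_empty, Finset.sum_empty, Finset.mul_sum, ← Finset.sum_add_distrib, add_zero]
      refine Finset.sum_eq_zero fun i _ => ?_
      linear_combination w x i * heq x hx i)
  simp only [Fin.sum_univ_succ, Matrix.cons_val_zero, Matrix.cons_val_succ,
        Finset.univ_eq_empty, Finset.sum_empty, add_zero, o1, o2] at c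
  linear_combination c + ν * g

/-- The velocity part of the energy estimate. -/
lemma vel_ineq {d : ℕ} {a b : Fin d → ℝ} (τ ν : ℝ) (hτ : 0 < τ) (hν : 0 < ν)
    {U V W H : (Fin d → ℝ) → Fin d → ℝ}
    (hU : ∀ i, ContDiff ℝ 1 (fun y => U y i)) (hV : ∀ i, ContDiff ℝ 1 (fun y => V y i))
    (hW : ∀ i, ContDiff ℝ 1 (fun y => W y i)) (hH : ∀ i, ContDiff ℝ 1 (fun y => H y i))
    (o1 : (3 / (2 * τ)) * (∫ x in Set.Icc a b, ∑ i, (U x i - H x i) * U x i)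
      + ν * (∫ x in Set.Icc a b, ∑ i, ∑ j,
        pd j (fun y => U y i - H y i) x * pd j (fun y => U y i) x) = 0)
    (o2 : (3 / (2 * τ)) * (∫ x in Set.Icc a b, ∑ i, (U x i - H x i) * V x i)
      + ν * (∫ x in Set.Icc a b, ∑ i, ∑ j,
        pd j (fun y => U y i - H y i) x * pd j (fun y => V y i) x) = 0) :
    (1/4) * ((∫ x in Set.Icc a b, ∑ i, (U x i)^2)
        + (∫ x in Set.Icc a b, ∑ i, (2 * U x i - V x i)^2)
        - (∫ x in Set.Icc a b, ∑ i, (V x i)^2)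
        - (∫ x in Set.Icc a b, ∑ i, (2 * V x i - W x i)^2))
      + (ν * τ / 6) * ((∫ x in Set.Icc a b, ∑ i, ∑ j, (pd j (fun y => U y i) x)^2)
        - (∫ x in Set.Icc a b, ∑ i, ∑ j, (pd j (fun y => V y i) x)^2)
        + (∫ x in Set.Icc a b, ∑ i, ∑ j, (pd j (fun y => U y i - H y i) x)^2)
        + (∫ x in Set.Icc a b, ∑ i, ∑ j, (pd j (fun y => H y i) x)^2))
      ≤ τ * (∫ x in Set.Icc a b, ∑ i, (3 * H x i - 4 * V x i + W x i) / (2 * τ) * H x i)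
        + ν * τ * (∫ x in Set.Icc a b, ∑ i, ∑ j,
            pd j (fun y => H y i) x * pd j (fun y => H y i) x) := by
  have hU0 := fun i => (hU i).continuous
  have hV0 := fun i => (hV i).continuous
  have hW0 := fun i => (hW i).continuous
  have hH0 := fun i => (hH i).continuous
  have hU1 := fun i j => cont_pd (hU i) j
  have hV1 := fun i j => cont_pd (hV i) j
  have hH1 := fun i j => cont_pd (hH i) j
  have hE1 := fun i j => cont_pd ((hU i).sub (hH i)) j
  have c1 := comb_nonneg a b ![-1/4, -1/4, 1/4, 1/4, τ, 5/2, -1]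
    ![fun x => ∑ i, (U x i)^2, fun x => ∑ i, (2 * U x i - V x i)^2,
      fun x => ∑ i, (V x i)^2, fun x => ∑ i, (2 * V x i - W x i)^2,
      fun x => ∑ i, (3 * H x i - 4 * V x i + W x i) / (2 * τ) * H x i,
      fun x => ∑ i, (U x i - H x i) * U x i,
      fun x => ∑ i, (U x i - H x i) * V x i]
    (by
      simp only [Fin.forall_fin_succ, IsEmpty.forall_iff, and_true]
      refine ⟨?_, ?_, ?_, ?_, ?_, ?_, ?_⟩ <;> simp <;> fun_prop)
    (by
      intro x hx
      simp only [Fin.sum_univ_succ, Matrix.cons_val_zero, Matrix.cons_val_succ,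
        Finset.univ_eq_empty, Finset.sum_empty, Finset.mul_sum, ← Finset.sum_add_distrib, add_zero]
      refine Finset.sum_nonneg fun i _ => ?_
      have e : τ * ((3 * H x i - 4 * V x i + W x i) / (2 * τ) * H x i)
          = (3 * H x i - 4 * V x i + W x i) * H x i / 2 := by field_simp
      rw [e]
      nlinarith [sq_nonneg (U x i - 2 * V x i + W x i - (U x i - H x i)),
        sq_nonneg (U x i - H x i)])
  have c2 := comb_nonneg a b ![-1, 1, -1, -1, 6, 10, -4]
    ![fun x => ∑ i, ∑ j, (pd j (fun y => U y i) x)^2,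
      fun x => ∑ i, ∑ j, (pd j (fun y => V y i) x)^2,
      fun x => ∑ i, ∑ j, (pd j (fun y => U y i - H y i) x)^2,
      fun x => ∑ i, ∑ j, (pd j (fun y => H y i) x)^2,
      fun x => ∑ i, ∑ j, pd j (fun y => H y i) x * pd j (fun y => H y i) x,
      fun x => ∑ i, ∑ j, pd j (fun y => U y i - H y i) x * pd j (fun y => U y i) x,
      fun x => ∑ i, ∑ j, pd j (fun y => U y i - H y i) x * pd j (fun y => V y i) x]
    (by
      simp only [Fin.forall_fin_succ, IsEmpty.forall_iff, and_true]
      refine ⟨?_, ?_, ?_, ?_, ?_, ?_, ?_⟩ <;> simp <;> fun_prop)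
    (by
      intro x hx
      simp only [Fin.sum_univ_succ, Matrix.cons_val_zero, Matrix.cons_val_succ,
        Finset.univ_eq_empty, Finset.sum_empty, Finset.mul_sum, ← Finset.sum_add_distrib, add_zero]
      refine Finset.sum_nonneg fun i _ => Finset.sum_nonneg fun j _ => ?_
      rw [pd_sub (hU i) (hH i)]
      nlinarith [sq_nonneg (pd j (fun y => V y i) x - 2 * pd j (fun y => U y i) x
        + 2 * pd j (fun y => H y i) x), sq_nonneg (pd j (fun y => U y i) x)])
  simp only [Fin.sum_univ_succ, Matrix.cons_val_zero, Matrix.cons_val_succ,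
        Finset.univ_eq_empty, Finset.sum_empty, add_zero] at c1 c2
  have c3 := mul_nonneg (by positivity : 0 ≤ ν * τ / 6) c2
  have ht : τ * (3 / (2 * τ)) = 3 / 2 := by field_simp
  have o1' := congrArg (fun z => τ * z) o1
  have o2' := congrArg (fun z => τ * z) o2
  simp only [mul_add, ← mul_assoc, ht, mul_zero] at o1' o2'
  linarith

/-- The energy identity for a scalar with continuous entries, in inequality form. -/
lemma bdf2_ineq {d : ℕ} {a b : Fin d → ℝ} (τ : ℝ) (hτ : 0 < τ) {ι : Type} (s : Finset ι)
    {A B C : ι → (Fin d → ℝ) → ℝ}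
    (hA : ∀ i, Continuous (A i)) (hB : ∀ i, Continuous (B i)) (hC : ∀ i, Continuous (C i)) :
    0 ≤ 4 * τ * (∫ x in Set.Icc a b, ∑ i ∈ s, A i x * ((3 * A i x - 4 * B i x + C i x) / (2 * τ)))
      - (∫ x in Set.Icc a b, ∑ i ∈ s, (A i x)^2)
      - (∫ x in Set.Icc a b, ∑ i ∈ s, (2 * A i x - B i x)^2)
      + (∫ x in Set.Icc a b, ∑ i ∈ s, (B i x)^2)
      + (∫ x in Set.Icc a b, ∑ i ∈ s, (2 * B i x - C i x)^2) := by
  have c1 := comb_nonneg a b ![4 * τ, -1, -1, 1, 1]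
    ![fun x => ∑ i ∈ s, A i x * ((3 * A i x - 4 * B i x + C i x) / (2 * τ)),
      fun x => ∑ i ∈ s, (A i x)^2, fun x => ∑ i ∈ s, (2 * A i x - B i x)^2,
      fun x => ∑ i ∈ s, (B i x)^2, fun x => ∑ i ∈ s, (2 * B i x - C i x)^2]
    (by
      simp only [Fin.forall_fin_succ, IsEmpty.forall_iff, and_true]
      refine ⟨?_, ?_, ?_, ?_, ?_⟩ <;> simp <;> fun_prop)
    (by
      intro x hx
      simp only [Fin.sum_univ_succ, Matrix.cons_val_zero, Matrix.cons_val_succ,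
        Finset.univ_eq_empty, Finset.sum_empty, Finset.mul_sum, ← Finset.sum_add_distrib, add_zero]
      refine Finset.sum_nonneg fun i _ => ?_
      have e : 4 * τ * (A i x * ((3 * A i x - 4 * B i x + C i x) / (2 * τ)))
          = 2 * A i x * (3 * A i x - 4 * B i x + C i x) := by field_simp; ring
      rw [e]
      nlinarith [sq_nonneg (A i x - 2 * B i x + C i x)])
  simp only [Fin.sum_univ_succ, Matrix.cons_val_zero, Matrix.cons_val_succ,
        Finset.univ_eq_empty, Finset.sum_empty, add_zero] at c1
  linarith

/-- Unconditional energy dissipation of the second-order (BDF2) structure-preserving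
IVS scheme (Theorem 3.3, second part). -/
theorem stmt3 (d : ℕ) (hd : 1 ≤ d) (a b : Fin d → ℝ) (hab : ∀ i, a i < b i)
    (Ω : Set (Fin d → ℝ)) (hΩ : Ω = Set.Icc a b)
    (τ M lam ν ε δ₀ β : ℝ)
    (hτ : 0 < τ) (hM : 0 < M) (hlam : 0 < lam) (hν : 0 < ν) (hε : 0 < ε)
    (hδ₀ : 0 < δ₀) (hβ : 0 ≤ β)
    (γs Rnm1 Rn Rn1 ξ : ℝ)
    (φnm1 φn φn1 μnm1 μn μn1 pnm1 pn : (Fin d → ℝ) → ℝ)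
    (pn1 : (Fin d → ℝ) → ℝ)
    (unm1 un un1 uhat1 : (Fin d → ℝ) → Fin d → ℝ)
    (hφnm1 : ContDiff ℝ 2 φnm1) (hφn : ContDiff ℝ 2 φn) (hφn1 : ContDiff ℝ 2 φn1)
    (hμnm1 : ContDiff ℝ 2 μnm1) (hμn : ContDiff ℝ 2 μn) (hμn1 : ContDiff ℝ 2 μn1)
    (hpnm1 : ContDiff ℝ 2 pnm1) (hpn : ContDiff ℝ 2 pn) (hpn1 : ContDiff ℝ 1 pn1)
    (hunm1 : ContDiff ℝ 2 unm1) (hun : ContDiff ℝ 2 un) (hun1 : ContDiff ℝ 2 un1)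
    (huhat1 : ContDiff ℝ 2 uhat1)
    (hE1pos : 0 < E1 Ω ε β (sstar φn φnm1) + δ₀)
    (hξ : ξ = Rn1 / Real.sqrt (E1 Ω ε β (sstar φn φnm1) + δ₀))
    -- (i) discrete Cahn–Hilliard equation
    (heq1 : ∀ x ∈ Ω,
      (3 * φn1 x - 4 * φn x + φnm1 x) / (2 * τ)
        + ξ * vdiv (fun y i => vstar un unm1 y i * sstar φn φnm1 y) x
        = M * lap μn1 x)
    -- (ii) chemical potential
    (heq2 : ∀ x ∈ Ω,
      μn1 x = -lam * lap φn1 x + lam * β * φn1 x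
        + lam * ξ * Fprime ε β (sstar φn φnm1 x))
    -- (iii) intermediate velocity
    (heq3 : ∀ x ∈ Ω, ∀ i : Fin d,
      (3 * uhat1 x i - 4 * un x i + unm1 x i) / (2 * τ)
        + ξ * convect (vstar un unm1) (vstar un unm1) x i
        - ν * lap (fun y => uhat1 y i) x
        = -ξ * (sstar φn φnm1 x * pd i (sstar μn μnm1) x
            + γs * pd i (sstar pn pnm1) x))
    -- (iv) correction step
    (heq4 : ∀ x ∈ Ω, ∀ i : Fin d,
      (3 / (2 * τ)) * (un1 x i - uhat1 x i)
        - ν * lap (fun y => un1 y i - uhat1 y i) x + pd i pn1 x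
        = γs * pd i (sstar pn pnm1) x)
    -- (v) incompressibility
    (heq5 : ∀ x ∈ Ω, vdiv un1 x = 0 ∧ vdiv un x = 0 ∧ vdiv unm1 x = 0)
    -- boundary conditions
    (hφbc : neumannBC a b φn1) (hμbc : neumannBC a b μn1)
    (huhatbc : ∀ x ∈ frontier Ω, uhat1 x = 0)
    (hun1bc : ∀ x ∈ frontier Ω, un1 x = 0)
    (hunbc : ∀ x ∈ frontier Ω, un x = 0)
    (hunm1bc : ∀ x ∈ frontier Ω, unm1 x = 0)
    -- scalar auxiliary-variable relation
    (heqR : (3 * Rn1 - 4 * Rn + Rnm1) / (2 * τ) =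
      (lam * (∫ x in Ω, Fprime ε β (sstar φn φnm1 x)
              * ((3 * φn1 x - 4 * φn x + φnm1 x) / (2 * τ)))
        + (∫ x in Ω, μn1 x * vdiv (fun y i => vstar un unm1 y i * sstar φn φnm1 y) x)
        + (∫ x in Ω, ∑ i, uhat1 x i * (sstar φn φnm1 x * pd i (sstar μn μnm1) x))
        + trib Ω (vstar un unm1) (vstar un unm1) uhat1
        + γs * (∫ x in Ω, ∑ i, pd i (sstar pn pnm1) x * uhat1 x i))
      / (2 * lam * Real.sqrt (E1 Ω ε β (sstar φn φnm1) + δ₀))) :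
    -- discrete modified energy dissipation law
    ((1/4) * ((∫ x in Ω, ∑ i, (un1 x i)^2) + (∫ x in Ω, ∑ i, (2 * un1 x i - un x i)^2))
      + (lam/4) * ((∫ x in Ω, ∑ i, (pd i φn1 x)^2)
          + (∫ x in Ω, ∑ i, (pd i (sstar φn1 φn) x)^2))
      + (lam * β / 4) * ((∫ x in Ω, (φn1 x)^2) + (∫ x in Ω, (sstar φn1 φn x)^2))
      + (lam/2) * (Rn1^2 + (2 * Rn1 - Rn)^2)
      + (ν * τ / 6) * (∫ x in Ω, ∑ i, ∑ j, (pd j (fun y => un1 y i) x)^2))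
    - ((1/4) * ((∫ x in Ω, ∑ i, (un x i)^2) + (∫ x in Ω, ∑ i, (2 * un x i - unm1 x i)^2))
      + (lam/4) * ((∫ x in Ω, ∑ i, (pd i φn x)^2)
          + (∫ x in Ω, ∑ i, (pd i (sstar φn φnm1) x)^2))
      + (lam * β / 4) * ((∫ x in Ω, (φn x)^2) + (∫ x in Ω, (sstar φn φnm1 x)^2))
      + (lam/2) * (Rn^2 + (2 * Rn - Rnm1)^2)
      + (ν * τ / 6) * (∫ x in Ω, ∑ i, ∑ j, (pd j (fun y => un y i) x)^2))
    ≤ -(M * τ) * (∫ x in Ω, ∑ i, (pd i μn1 x)^2)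
      - (ν * τ / 6) * ((∫ x in Ω, ∑ i, ∑ j, (pd j (fun y => un1 y i - uhat1 y i) x)^2)
        + (∫ x in Ω, ∑ i, ∑ j, (pd j (fun y => uhat1 y i) x)^2)) := by
  subst hΩ
  have h12 : (1 : WithTop ℕ∞) ≤ 2 := by norm_num
  -- component regularity
  have kU := fun i => contDiff_pi.1 hun1 i
  have kV := fun i => contDiff_pi.1 hun i
  have kW := fun i => contDiff_pi.1 hunm1 i
  have kH := fun i => contDiff_pi.1 huhat1 i
  have kU1 := fun i => (kU i).of_le h12
  have kV1 := fun i => (kV i).of_le h12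
  have kW1 := fun i => (kW i).of_le h12
  have kH1 := fun i => (kH i).of_le h12
  have fU := fun i x hx h => hun1bc x (face_frontier (a := a) (b := b) (x := x) hx i h)
  have fV := fun i x hx h => hunbc x (face_frontier (a := a) (b := b) (x := x) hx i h)
  have fH := fun i x hx h => huhatbc x (face_frontier (a := a) (b := b) (x := x) hx i h)
  have a0 := hφnm1.of_le h12
  have a1 := hφn.of_le h12
  have a2 := hφn1.of_le h12
  have m0 := hμnm1.of_le h12
  have m1 := hμn.of_le h12
  have m2 := hμn1.of_le h12
  have q0 := hpnm1.of_le h12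
  have q1 := hpn.of_le h12
  have hps : ContDiff ℝ 1 (sstar pn pnm1) := (contDiff_const.mul q1).sub q0
  have hφs : ContDiff ℝ 1 (sstar φn φnm1) := (contDiff_const.mul a1).sub a0
  have hμs : ContDiff ℝ 1 (sstar μn μnm1) := (contDiff_const.mul m1).sub m0
  have hus : ∀ i, ContDiff ℝ 1 (fun y => vstar un unm1 y i) :=
    fun i => (contDiff_const.mul (kV1 i)).sub (kW1 i)
  -- velocity
  have o1 := corr_orth hab τ ν γs hpn1 hps (e := fun x i => un1 x i - uhat1 x i) (w := un1)
    (fun i => (kU i).sub (kH i)) kU1 heq4 (fun x hx => (heq5 x hx).1) fU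
  have o2 := corr_orth hab τ ν γs hpn1 hps (e := fun x i => un1 x i - uhat1 x i) (w := un)
    (fun i => (kU i).sub (kH i)) kV1 heq4 (fun x hx => (heq5 x hx).2.1) fV
  have hvel := vel_ineq τ ν hτ hν kU1 kV1 kW1 kH1 o1 o2
  have gH := vgreen hab kH kH1 fH
  -- scalars
  set P : (Fin d → ℝ) → ℝ := fun y => (3 * φn1 y - 4 * φn y + φnm1 y) / (2 * τ) with hP
  have hPC : ContDiff ℝ 1 P :=
    (((contDiff_const.mul a2).sub (contDiff_const.mul a1)).add a0).div_const _
  have hPpd : ∀ i x, pd i P x = (3 * pd i φn1 x - 4 * pd i φn x + pd i φnm1 x) / (2 * τ) := by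
    intro i x
    have d2 := a2.differentiable (by norm_num) x
    have d1 := a1.differentiable (by norm_num) x
    have d0 := a0.differentiable (by norm_num) x
    have := ((((d2.hasFDerivAt.const_mul 3).sub (d1.hasFDerivAt.const_mul 4)).add
      d0.hasFDerivAt).mul_const (2 * τ)⁻¹)
    have e : P = fun y => (3 * φn1 y - 4 * φn y + φnm1 y) * (2 * τ)⁻¹ := by
      ext y; simp only [hP, div_eq_mul_inv]
    unfold pd
    have this2 : HasFDerivAt (fun y => (3 * φn1 y - 4 * φn y + φnm1 y) * (2 * τ)⁻¹) _ x := this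
    rw [e, this2.fderiv]
    simp
    ring
  have gφ := green hab hφn1 hPC (fun i x hx h => by rw [hφbc i x hx h, zero_mul])
  have gμ := green hab hμn1 m2 (fun i x hx h => by rw [hμbc i x hx h, zero_mul])
  have b1 := bdf2_ineq (a := a) (b := b) τ hτ Finset.univ (cont_pd a2) (cont_pd a1) (cont_pd a0)
  have b2 := bdf2_ineq (a := a) (b := b) τ hτ (Finset.univ : Finset Unit)
    (fun _ => hφn1.continuous) (fun _ => hφn.continuous) (fun _ => hφnm1.continuous)
  simp only [← hPpd] at b1
  simp only [Finset.univ_unique, Finset.sum_singleton] at b2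
  -- continuity facts
  have cP := hPC.continuous
  have cμ := hμn1.continuous
  have cφ := hφn1.continuous
  have cφs := hφs.continuous
  have clμ := cont_lap hμn1
  have clφ := cont_lap hφn1
  have clH := fun i => cont_lap (kH i)
  have cH := fun i => (kH i).continuous
  have cV := fun i => (kV i).continuous
  have cW := fun i => (kW i).continuous
  have cps := fun i => cont_pd hps i
  have cμs := fun i => cont_pd hμs i
  have cF : Continuous (fun x => Fprime ε β (sstar φn φnm1 x)) := by
    unfold Fprime
    fun_prop
  have cdiv : Continuous (vdiv (fun y i => vstar un unm1 y i * sstar φn φnm1 y)) :=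
    continuous_finsetSum _ fun i _ => cont_pd ((hus i).mul hφs) i
  have ccon : ∀ i, Continuous (fun x => convect (vstar un unm1) (vstar un unm1) x i) :=
    fun i => continuous_finsetSum _ fun j _ => (hus j).continuous.mul (cont_pd (hus i) j)
  -- tested equations
  have s1 := comb_zero a b ![1, ξ, -M]
    ![fun x => μn1 x * P x,
      fun x => μn1 x * vdiv (fun y i => vstar un unm1 y i * sstar φn φnm1 y) x,
      fun x => lap μn1 x * μn1 x]
    (by
      simp only [Fin.forall_fin_succ, IsEmpty.forall_iff, and_true]
      refine ⟨?_, ?_, ?_⟩ <;> simp <;> fun_prop)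
    (by
      intro x hx
      simp only [Fin.sum_univ_succ, Matrix.cons_val_zero, Matrix.cons_val_succ,
        Finset.univ_eq_empty, Finset.sum_empty, add_zero, hP]
      linear_combination μn1 x * heq1 x hx)
  have s2 := comb_zero a b ![1, lam, -(lam * β), -(lam * ξ)]
    ![fun x => μn1 x * P x, fun x => lap φn1 x * P x, fun x => φn1 x * P x,
      fun x => Fprime ε β (sstar φn φnm1 x) * P x]
    (by
      simp only [Fin.forall_fin_succ, IsEmpty.forall_iff, and_true]
      refine ⟨?_, ?_, ?_, ?_⟩ <;> simp <;> fun_prop)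
    (by
      intro x hx
      simp only [Fin.sum_univ_succ, Matrix.cons_val_zero, Matrix.cons_val_succ,
        Finset.univ_eq_empty, Finset.sum_empty, add_zero]
      linear_combination P x * heq2 x hx)
  have s3 := comb_zero a b ![1, ξ, -ν, ξ, ξ * γs]
    ![fun x => ∑ i, (3 * uhat1 x i - 4 * un x i + unm1 x i) / (2 * τ) * uhat1 x i,
      fun x => ∑ i, convect (vstar un unm1) (vstar un unm1) x i * uhat1 x i,
      fun x => ∑ i, lap (fun y => uhat1 y i) x * uhat1 x i,
      fun x => ∑ i, uhat1 x i * (sstar φn φnm1 x * pd i (sstar μn μnm1) x),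
      fun x => ∑ i, pd i (sstar pn pnm1) x * uhat1 x i]
    (by
      simp only [Fin.forall_fin_succ, IsEmpty.forall_iff, and_true]
      refine ⟨?_, ?_, ?_, ?_, ?_⟩ <;> simp <;> fun_prop)
    (by
      intro x hx
      simp only [Fin.sum_univ_succ, Matrix.cons_val_zero, Matrix.cons_val_succ,
        Finset.univ_eq_empty, Finset.sum_empty, Finset.mul_sum, ← Finset.sum_add_distrib, add_zero]
      refine Finset.sum_eq_zero fun i _ => ?_
      linear_combination uhat1 x i * heq3 x hx i)
  simp only [Fin.sum_univ_succ, Matrix.cons_val_zero, Matrix.cons_val_succ,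
        Finset.univ_eq_empty, Finset.sum_empty, add_zero] at s1 s2 s3
  -- the auxiliary scalar
  have hS : 0 < Real.sqrt (E1 (Set.Icc a b) ε β (sstar φn φnm1) + δ₀) := Real.sqrt_pos.2 hE1pos
  generalize Real.sqrt (E1 (Set.Icc a b) ε β (sstar φn φnm1) + δ₀) = S at hS hξ heqR
  unfold trib at heqR
  simp only [← sq] at gμ
  have e1 : ∀ x i, pd i (sstar φn1 φn) x = 2 * pd i φn1 x - pd i φn x :=
    fun x i => pd_sstar a2 a1 i x
  have e2 : ∀ x i, pd i (sstar φn φnm1) x = 2 * pd i φn x - pd i φnm1 x :=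
    fun x i => pd_sstar a1 a0 i x
  simp only [e1, e2]
  have e3 : ∀ f g : (Fin d → ℝ) → ℝ, (∫ x in Set.Icc a b, (sstar f g x)^2)
    = ∫ x in Set.Icc a b, (2 * f x - g x)^2 := fun f g => rfl
  simp only [e3]
  change _ = (lam * (∫ x in Set.Icc a b, Fprime ε β (sstar φn φnm1 x) * P x) + _ + _ + _ + _)
    / (2 * lam * S) at heqR
  change 0 ≤ 4 * τ * (∫ x in Set.Icc a b, φn1 x * P x) - _ - _ + _ + _ at b2
  generalize (∫ x in Set.Icc a b, Fprime ε β (sstar φn φnm1 x) * P x) = T1 at *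
  generalize (∫ x in Set.Icc a b,
    μn1 x * vdiv (fun y i => vstar un unm1 y i * sstar φn φnm1 y) x) = T2 at *
  generalize (∫ x in Set.Icc a b, ∑ i,
    uhat1 x i * (sstar φn φnm1 x * pd i (sstar μn μnm1) x)) = T3 at *
  generalize (∫ x in Set.Icc a b,
    ∑ i, convect (vstar un unm1) (vstar un unm1) x i * uhat1 x i) = T4 at *
  generalize (∫ x in Set.Icc a b, ∑ i, pd i (sstar pn pnm1) x * uhat1 x i) = T5 at *
  have hR : lam * Rn1 * (3 * Rn1 - 4 * Rn + Rnm1)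
      = τ * ξ * (lam * T1 + T2 + T3 + T4 + γs * T5) := by
    rw [hξ]
    field_simp at heqR ⊢
    linear_combination Rn1 * heqR
  have r1 := mul_nonneg hlam.le (sq_nonneg (Rn1 - 2 * Rn + Rnm1))
  have b1' := mul_nonneg hlam.le b1
  have b2' := mul_nonneg (mul_nonneg hlam.le hβ) b2
  have t1 := congrArg (fun z => τ * z) s1
  have t2 := congrArg (fun z => τ * z) s2
  have t3 := congrArg (fun z => τ * z) s3
  have g1 := congrArg (fun z => τ * lam * z) gφ
  have g2 := congrArg (fun z => τ * M * z) gμ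
  have g3 := congrArg (fun z => τ * ν * z) gH
  linarith
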